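/- Let n ≥ 2 and let 𝔹 be the open unit ball in ℝⁿ. For x ∈ 𝔹 with r = |x|, let 𝒯_n(x) be the smallest constant such that |div u(x)| ≤ 𝒯_n(x)·‖g‖_{[L^∞(S^{n−1})]^n} for every vector field u that is the Poisson integral over S^{n−1} of g ∈ [L^∞(S^{n−1})]^n. Then 𝒯_n(x) = [2^{n−1} ω_{n−1} / (ω_n (1+r)^{n−1} (1−r))] ∫₀^{π/2} [ (n−(n−2)r)² + 4 n(n−2) r cos²θ ]^{1/2} · sin^{n−2}θ / [1 + ((1−r)/(1+r))² tan²θ]^{(n−2)/2} dθ. In particular 𝒯_2(x) = 2/(1−r²) and 𝒯_3(x) = (1/(1−r²)) ( 2 + ((3−r²)/(2√3 r)) ln((√3+r)/(√3−r)) ). -/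

import Mathlib

open MeasureTheory Real Filter Metric
open scoped Real RealInnerProductSpace

noncomputable section

/-- `Eu n` is the Euclidean space `ℝⁿ`. -/
abbrev Eu (n : ℕ) := EuclideanSpace ℝ (Fin n)

/-- `ω_n`: the surface area of the unit sphere `S^{n-1}` in `ℝⁿ`,
given by the classical formula `2 π^{n/2} / Γ(n/2)`. -/
def sphereArea (n : ℕ) : ℝ := 2 * π ^ ((n : ℝ) / 2) / Real.Gamma ((n : ℝ) / 2)

/-- The Poisson integral `u(x) = (1/ωₙ) ∫_{S^{n-1}} ((1-|x|²)/|y-x|ⁿ) g(y) dσ_y` of a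
vector-valued boundary function `g : S^{n-1} → ℝ^m`. -/
def poissonBallV {n m : ℕ} (g : Metric.sphere (0 : Eu n) 1 → Eu m) (x : Eu n) : Eu m :=
  (1 / sphereArea n) • ∫ y : Metric.sphere (0 : Eu n) 1,
    ((1 - ‖x‖ ^ 2) / ‖(y : Eu n) - x‖ ^ n) • g y ∂(volume.toSphere)

/-- The divergence `div u(x) = ∑ⱼ ∂uⱼ/∂xⱼ (x)` of a vector field `u : ℝⁿ → ℝⁿ`. -/
def divg {n : ℕ} (u : Eu n → Eu n) (x : Eu n) : ℝ :=
  ∑ j, fderiv ℝ (fun y => u y j) x (EuclideanSpace.single j 1)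

/-- The claimed value of the sharp coefficient `𝒯_n(x)` (with `r = |x|`). -/
def Tcoef (n : ℕ) (r : ℝ) : ℝ :=
  (2 ^ (n - 1) * sphereArea (n - 1) / (sphereArea n * (1 + r) ^ (n - 1) * (1 - r))) *
    ∫ θ in (0:ℝ)..(π / 2),
      Real.sqrt (((n : ℝ) - ((n : ℝ) - 2) * r) ^ 2 +
          4 * (n : ℝ) * ((n : ℝ) - 2) * r * Real.cos θ ^ 2) *
        Real.sin θ ^ (n - 2) /
        (1 + ((1 - r) / (1 + r)) ^ 2 * Real.tan θ ^ 2) ^ (((n : ℝ) - 2) / 2)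

open Set Measure in
theorem lintegral_polar_addHaar {n : ℕ} (F : Eu (n+1) → ENNReal) (hF : Measurable F) :
    ∫⁻ y, F y = ∫⁻ s : Metric.sphere (0 : Eu (n+1)) 1, ∫⁻ t in Set.Ioi (0:ℝ),
      ENNReal.ofReal (t ^ n) * F (t • (s : Eu (n+1))) ∂volume ∂(volume.toSphere) := by
  have hmp := (volume : Measure (Eu (n+1))).measurePreserving_homeomorphUnitSphereProd
  have hd : Module.finrank ℝ (Eu (n+1)) - 1 = n := by simp
  rw [hd] at hmp
  calc
    ∫⁻ y, F y = ∫⁻ y in ({0}ᶜ : Set (Eu (n+1))), F y := by rw [restrict_compl_singleton]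
    _ = ∫⁻ y : ({(0)}ᶜ : Set (Eu (n+1))), F y.1 ∂((volume : Measure (Eu (n+1))).comap (↑)) := by
      rw [lintegral_subtype_comap (measurableSet_singleton _).compl]
    _ = ∫⁻ p : (Metric.sphere (0 : Eu (n+1)) 1) × Ioi (0:ℝ), F (p.2.1 • (p.1 : Eu (n+1)))
          ∂((volume : Measure (Eu (n+1))).toSphere.prod (.volumeIoiPow n)) := by
      rw [← hmp.lintegral_comp_emb (Homeomorph.measurableEmbedding _)]
      refine lintegral_congr fun y => ?_
      congr 1
      have := (homeomorphUnitSphereProd (Eu (n+1))).symm_apply_apply y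
      conv_lhs => rw [← this]
      rfl
    _ = ∫⁻ s : Metric.sphere (0 : Eu (n+1)) 1, ∫⁻ t : Ioi (0:ℝ), F (t.1 • (s : Eu (n+1)))
          ∂(.volumeIoiPow n) ∂(volume.toSphere) := by
      rw [lintegral_prod]
      have : Measurable (fun p : (Metric.sphere (0 : Eu (n+1)) 1) × Ioi (0:ℝ) =>
          F (p.2.1 • (p.1 : Eu (n+1)))) := by fun_prop
      exact this.aemeasurable
    _ = _ := by
      refine lintegral_congr fun s => ?_
      rw [volumeIoiPow, lintegral_withDensity_eq_lintegral_mul]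
      · rw [← lintegral_subtype_comap measurableSet_Ioi]
        rfl
      · fun_prop
      · fun_prop

theorem exists_split {m : ℕ} (e : Eu (m+1)) (he : ‖e‖ = 1) :
    ∃ Φ : ℝ × Eu m → Eu (m+1), MeasurePreserving Φ volume volume ∧
      ∀ p, ⟪e, Φ p⟫ = p.1 ∧ ‖Φ p‖ = Real.sqrt (p.1^2 + ‖p.2‖^2) := by
  obtain ⟨b, hb⟩ : ∃ b : OrthonormalBasis (Fin (m+1)) ℝ (Eu (m+1)), b 0 = e := by
    have : Orthonormal ℝ (({0} : Set (Fin (m+1))).domRestrict (fun _ => e)) := by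
      rw [orthonormal_iff_ite]
      intro i j
      have : i = j := Subsingleton.elim _ _
      simp [this, he]
    obtain ⟨b, hb⟩ := this.exists_orthonormalBasis_extension_of_card_eq (by simp)
    exact ⟨b, hb 0 rfl⟩
  refine ⟨fun p => b.repr.symm (WithLp.toLp 2
    ((MeasurableEquiv.piFinSuccAbove (fun _ => ℝ) 0).symm (p.1, WithLp.ofLp p.2))), ?_, ?_⟩
  · have h1 := (volume_preserving_piFinSuccAbove (fun _ : Fin (m+1) => ℝ) 0).symm
    have h2 : MeasurePreserving (fun p : ℝ × Eu m => (p.1, WithLp.ofLp p.2)) volume volume :=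
      (MeasurePreserving.id volume).prod (PiLp.volume_preserving_ofLp (Fin m))
    exact b.measurePreserving_repr_symm.comp ((PiLp.volume_preserving_toLp _).comp (h1.comp h2))
  · intro p
    constructor
    · rw [← hb, ← b.repr_apply_apply]
      simp [MeasurableEquiv.piFinSuccAbove]
    · rw [LinearIsometryEquiv.norm_map, EuclideanSpace.norm_eq]
      congr 1
      rw [Fin.sum_univ_succ, EuclideanSpace.norm_sq_eq]
      simp [MeasurableEquiv.piFinSuccAbove]

theorem toSphere_univ_eq {m : ℕ} : (volume : Measure (Eu (m+1))).toSphere Set.univ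
    = ENNReal.ofReal (sphereArea (m+1)) := by
  rw [Measure.toSphere_apply_univ, EuclideanSpace.volume_ball]
  simp only [finrank_euclideanSpace, Fintype.card_fin, ENNReal.ofReal_one, one_pow, one_mul]
  rw [← ENNReal.ofReal_natCast, ← ENNReal.ofReal_mul (by positivity)]
  congr 1
  unfold sphereArea
  have h : ((m+1 : ℕ) : ℝ)/2 ≠ 0 := by positivity
  rw [Real.Gamma_add_one h, Real.sqrt_eq_rpow, ← Real.rpow_mul_natCast pi_pos.le]
  have : Real.Gamma (((m+1 : ℕ) : ℝ)/2) ≠ 0 := (Real.Gamma_pos_of_pos (by positivity)).ne'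
  have e : (1/2 : ℝ) * ((m+1 : ℕ) : ℝ) = ((m+1 : ℕ) : ℝ)/2 := by ring
  rw [e]
  field_simp

open Set Measure in
theorem lintegral_slice {m : ℕ} (e : Eu (m+2)) (he : ‖e‖ = 1) (f : ℝ → ENNReal)
    (hf : Measurable f) :
    ∫⁻ s : Metric.sphere (0 : Eu (m+2)) 1, f ⟪e, (s : Eu (m+2))⟫ ∂(volume.toSphere)
     = ENNReal.ofReal (sphereArea (m+1)) *
      ∫⁻ φ in Set.Ioo 0 π, f (Real.cos φ) * ENNReal.ofReal (Real.sin φ ^ m) := by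
  set h : ℝ → ENNReal := (Iio (1:ℝ)).indicator 1 with hh
  have hhm : Measurable h := measurable_one.indicator measurableSet_Iio
  set C : ENNReal := ∫⁻ t in Ioi (0:ℝ), ENNReal.ofReal (t ^ (m+1)) * h t with hC
  have hCeq : C = ∫⁻ t in Ioo (0:ℝ) 1, ENNReal.ofReal (t ^ (m+1)) := by
    rw [hC, ← lintegral_indicator measurableSet_Ioi, ← lintegral_indicator measurableSet_Ioo]
    refine lintegral_congr fun t => ?_
    by_cases h0 : 0 < t <;> by_cases h1 : t < 1 <;> simp [indicator, h0, h1, hh]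
  have hC0 : C ≠ 0 := by
    rw [hCeq]
    refine ((setLIntegral_pos_iff (by fun_prop)).2 ?_).ne'
    have : Function.support (fun t : ℝ => ENNReal.ofReal (t ^ (m+1))) ∩ Ioo 0 1 = Ioo 0 1 := by
      refine inter_eq_right.2 fun t ht => ?_
      simp only [Function.mem_support, ne_eq, ENNReal.ofReal_eq_zero, not_le]
      exact pow_pos ht.1 _
    rw [this]; simp
  have hC1 : C ≠ ⊤ := by
    rw [hCeq]
    refine (lt_of_le_of_lt (setLIntegral_mono (g := fun _ => 1) (by fun_prop) ?_) ?_).ne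
    · intro t ht
      rw [← ENNReal.ofReal_one]
      exact ENNReal.ofReal_le_ofReal (pow_le_one₀ ht.1.le ht.2.le)
    · simp
  have side1 : ∫⁻ y : Eu (m+2), f (⟪e, y⟫ / ‖y‖) * h ‖y‖ =
      (∫⁻ s : Metric.sphere (0 : Eu (m+2)) 1, f ⟪e, (s : Eu (m+2))⟫ ∂(volume.toSphere)) * C := by
    rw [lintegral_polar_addHaar _ (by fun_prop), ← lintegral_mul_const _ (by fun_prop)]
    refine lintegral_congr fun s => ?_
    rw [hC, ← lintegral_const_mul _ (by fun_prop)]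
    refine setLIntegral_congr_fun measurableSet_Ioi fun t ht => ?_
    have ht' : (0:ℝ) < t := ht
    have hs : ‖(s : Eu (m+2))‖ = 1 := by simp
    have : ‖t • (s : Eu (m+2))‖ = t := by rw [norm_smul, hs, mul_one, Real.norm_of_nonneg ht'.le]
    simp only [this, inner_smul_right]
    rw [mul_div_cancel_left₀ _ ht'.ne']
    ring
  set G : ℝ × ℝ → ENNReal := fun p =>
    (Ioi (0:ℝ)).indicator (fun t => ENNReal.ofReal (t ^ m)) p.2 *
      (f (p.1 / Real.sqrt (p.1^2 + p.2^2)) * h (Real.sqrt (p.1^2 + p.2^2))) with hG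
  have hi : Measurable ((Ioi (0:ℝ)).indicator (fun t : ℝ => ENNReal.ofReal (t ^ m))) :=
    Measurable.indicator (by fun_prop) measurableSet_Ioi
  have hGm : Measurable G := by
    rw [hG]; fun_prop
  have side2 : ∫⁻ y : Eu (m+2), f (⟪e, y⟫ / ‖y‖) * h ‖y‖ =
      ENNReal.ofReal (sphereArea (m+1)) * ∫⁻ p, G p := by
    obtain ⟨Φ, hΦ, hp⟩ := exists_split e he
    rw [← hΦ.lintegral_comp (by fun_prop)]
    simp only [hp]
    rw [volume_eq_prod, lintegral_prod _ (by fun_prop), volume_eq_prod,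
      lintegral_prod _ hGm.aemeasurable, ← lintegral_const_mul _ hGm.lintegral_prod_right']
    refine lintegral_congr fun a => ?_
    rw [lintegral_polar_addHaar _ (by fun_prop), ← toSphere_univ_eq]
    rw [mul_comm, ← lintegral_const]
    refine lintegral_congr fun s => ?_
    rw [← lintegral_indicator measurableSet_Ioi]
    refine lintegral_congr fun t => ?_
    have hs : ‖(s : Eu (m+1))‖ = 1 := by simp
    by_cases ht : 0 < t <;> simp [hG, indicator, ht, norm_smul, hs]
  have side3 : ∫⁻ p, G p = 
      C * ∫⁻ φ in Set.Ioo 0 π, f (Real.cos φ) * ENNReal.ofReal (Real.sin φ ^ m) := by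
    rw [← lintegral_comp_polarCoord_symm, polarCoord_target]
    have hm2 : Measurable (fun p : ℝ × ℝ => ENNReal.ofReal p.1 • G (polarCoord.symm p)) := by
      simp only [polarCoord_symm_apply]
      fun_prop
    rw [volume_eq_prod, ← prod_restrict, lintegral_prod _ hm2.aemeasurable, hC,
      ← lintegral_mul_const _ (by fun_prop)]
    refine setLIntegral_congr_fun measurableSet_Ioi fun ρ hρ => ?_
    have hρ' : (0:ℝ) < ρ := hρ
    simp only
    rw [← lintegral_const_mul _ (by fun_prop), ← lintegral_indicator measurableSet_Ioo,
      ← lintegral_indicator measurableSet_Ioo]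
    refine lintegral_congr fun φ => ?_
    have hsq : Real.sqrt ((ρ * Real.cos φ)^2 + (ρ * Real.sin φ)^2) = ρ := by
      rw [mul_pow, mul_pow, ← mul_add, Real.cos_sq_add_sin_sq, mul_one, Real.sqrt_sq hρ'.le]
    by_cases h1 : φ ∈ Ioo 0 π
    · have hs : 0 < Real.sin φ := Real.sin_pos_of_mem_Ioo h1
      have h2 : φ ∈ Ioo (-π) π := ⟨by linarith [h1.1, pi_pos], h1.2⟩
      rw [indicator_of_mem h1, indicator_of_mem h2]
      simp only [hG, polarCoord_symm_apply, hsq, smul_eq_mul]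
      rw [indicator_of_mem (show ρ * Real.sin φ ∈ Ioi (0:ℝ) from mul_pos hρ' hs),
        mul_div_cancel_left₀ _ hρ'.ne', mul_pow, ENNReal.ofReal_mul (by positivity), pow_succ,
        ENNReal.ofReal_mul (by positivity)]
      ring
    · rw [indicator_of_notMem h1]
      by_cases h2 : φ ∈ Ioo (-π) π
      · rw [indicator_of_mem h2]
        have h3 : φ ≤ 0 := by
          by_contra hc
          exact h1 ⟨not_le.1 hc, h2.2⟩
        have hs : Real.sin φ ≤ 0 := Real.sin_nonpos_of_nonpos_of_neg_pi_le h3 h2.1.le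
        simp only [hG, polarCoord_symm_apply, smul_eq_mul]
        rw [indicator_of_notMem (show ρ * Real.sin φ ∉ Ioi (0:ℝ) from
          not_lt.2 (mul_nonpos_of_nonneg_of_nonpos hρ'.le hs))]
        simp
      · rw [indicator_of_notMem h2]
  rw [side1, side3] at side2
  rw [mul_comm C, ← mul_assoc] at side2
  exact (ENNReal.mul_left_inj hC0 hC1).1 side2

theorem integral_slice {m : ℕ} (e : Eu (m+2)) (he : ‖e‖ = 1) (f : ℝ → ℝ)
    (hf : Measurable f) (hf0 : ∀ t, 0 ≤ f t) :
    ∫ s : Metric.sphere (0 : Eu (m+2)) 1, f ⟪e, (s : Eu (m+2))⟫ ∂(volume.toSphere)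
     = sphereArea (m+1) *
      ∫ φ in Set.Ioo 0 π, f (Real.cos φ) * Real.sin φ ^ m := by
  have hA : 0 ≤ sphereArea (m+1) := by
    unfold sphereArea
    have := Real.Gamma_pos_of_pos (show (0:ℝ) < ((m+1 : ℕ):ℝ)/2 by positivity)
    positivity
  rw [integral_eq_lintegral_of_nonneg_ae (Eventually.of_forall fun s => hf0 _)
    (Measurable.aestronglyMeasurable (by fun_prop)), integral_eq_lintegral_of_nonneg_ae _ (by fun_prop)]
  · rw [lintegral_slice e he (fun t => ENNReal.ofReal (f t)) (by fun_prop), ENNReal.toReal_mul,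
      ENNReal.toReal_ofReal hA]
    congr 2
    refine lintegral_congr fun φ => ?_
    rw [ENNReal.ofReal_mul (hf0 _)]
  · refine (ae_restrict_iff' measurableSet_Ioo).2 (Eventually.of_forall fun φ hφ => ?_)
    exact mul_nonneg (hf0 _) (pow_nonneg (Real.sin_pos_of_mem_Ioo hφ).le _)

/-- The norm of the gradient of the Poisson kernel as a function of `t = ⟪e, y⟫`. -/
def gradN (n : ℕ) (r t : ℝ) : ℝ :=
  (Real.sqrt (1 - 2*r*t + r^2) ^ n)⁻¹ *
    Real.sqrt (4*r^2 + 2*n*(1-r^2) + n*(n-2)*(1-r^2)^2/(1 - 2*r*t + r^2))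

theorem pointwise_subst (m : ℕ) (r θ : ℝ) (hr : 0 ≤ r) (hr1 : r < 1)
    (hθ : θ ∈ Set.Ioo 0 (π/2)) :
    |2 * ((1 / (1 + ((1-r)/(1+r) * Real.tan θ)^2)) * ((1-r)/(1+r) * (1 / Real.cos θ ^2)))| *
      (gradN (m+2) r (Real.cos (2 * Real.arctan ((1-r)/(1+r) * Real.tan θ))) *
        Real.sin (2 * Real.arctan ((1-r)/(1+r) * Real.tan θ)) ^ m) =
    2^(m+1) / ((1+r)^(m+1) * (1-r)) *
      (Real.sqrt ((((m+2:ℕ) : ℝ) - (((m+2:ℕ) : ℝ) - 2) * r) ^ 2 +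
          4 * ((m+2:ℕ) : ℝ) * (((m+2:ℕ) : ℝ) - 2) * r * Real.cos θ ^ 2) *
        Real.sin θ ^ m /
        (1 + ((1 - r) / (1 + r)) ^ 2 * Real.tan θ ^ 2) ^ ((((m+2:ℕ) : ℝ) - 2) / 2)) := by
  have hs : 0 < Real.sin θ := Real.sin_pos_of_mem_Ioo ⟨hθ.1, by linarith [hθ.2, pi_pos]⟩
  have hc : 0 < Real.cos θ := Real.cos_pos_of_mem_Ioo ⟨by linarith [hθ.1, pi_pos], hθ.2⟩
  have hsc := Real.sin_sq_add_cos_sq θ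
  rw [Real.tan_eq_sin_div_cos]
  generalize Real.sin θ = s at *
  generalize Real.cos θ = c at *
  have hkpos : 0 < (1-r)/(1+r) := div_pos (by linarith) (by linarith)
  have hkdef : (1-r)/(1+r) * (1+r) = 1-r := by field_simp
  generalize (1-r)/(1+r) = k at *
  set D := c^2 + k^2*s^2 with hD
  have hDpos : 0 < D := by positivity
  obtain ⟨w, hw, hwD⟩ : ∃ w : ℝ, 0 < w ∧ w^2 = D := ⟨√D, Real.sqrt_pos.2 hDpos, Real.sq_sqrt hDpos.le⟩
  have h1r : 0 < 1 + r := by linarith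
  have h1r' : 0 < 1 - r := by linarith
  have hu : 1 + (k * (s/c))^2 = (w/c)^2 := by
    rw [div_pow, hwD, hD]; field_simp
  have hu' : 1 + k^2 * (s/c)^2 = (w/c)^2 := by rw [← mul_pow, hu]
  have hcos : Real.cos (2 * Real.arctan (k * (s/c))) = (c^2 - k^2*s^2)/w^2 := by
    rw [Real.cos_two_mul, Real.cos_sq_arctan, hu]
    field_simp
    rw [hwD, hD]; ring
  have hsin : Real.sin (2 * Real.arctan (k * (s/c))) = 2*k*s*c/w^2 := by
    rw [Real.sin_two_mul, Real.sin_arctan, Real.cos_arctan, hu, Real.sqrt_sq (by positivity)]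
    field_simp
  rw [hcos, hsin, hu, hu']
  have hq : 1 - 2*r*((c^2 - k^2*s^2)/w^2) + r^2 = ((1-r)/w)^2 := by
    field_simp
    have : k * (1+r) = 1 - r := hkdef
    rw [hwD]
    have e1 : k^2 * (1+r)^2 = (1-r)^2 := by rw [← mul_pow, this]
    have : s^2 = 1 - c^2 := by linarith
    rw [hD]
    linear_combination s^2 * e1 + (1-r)^2 * hsc
  have hden : ((w/c)^2) ^ ((((m+2:ℕ) : ℝ) - 2) / 2) = (w/c)^m := by
    have : (((m+2:ℕ) : ℝ) - 2) / 2 = (m:ℝ)/2 := by push_cast; ring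
    rw [this, ← Real.rpow_natCast (w/c) 2, ← Real.rpow_mul (by positivity)]
    have : ((2:ℕ):ℝ) * ((m:ℝ)/2) = (m:ℝ) := by push_cast; ring
    rw [this, Real.rpow_natCast]
  rw [hden, gradN, hq, Real.sqrt_sq (by positivity)]
  have hrad : 4*r^2 + 2*((m+2:ℕ):ℝ)*(1-r^2) + ((m+2:ℕ):ℝ)*(((m+2:ℕ):ℝ)-2)*(1-r^2)^2/((1-r)/w)^2
     = (((m+2:ℕ) : ℝ) - (((m+2:ℕ) : ℝ) - 2) * r) ^ 2 +
          4 * ((m+2:ℕ) : ℝ) * (((m+2:ℕ) : ℝ) - 2) * r * c ^ 2 := by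
    have e1 : (1-r^2)^2/((1-r)/w)^2 = (1-r)^2 + 4*r*c^2 := by
      have : (1-r^2)^2 = (1-r)^2*(1+r)^2 := by ring
      rw [this]
      field_simp
      have e1 : k^2 * (1+r)^2 = (1-r)^2 := by rw [← mul_pow, hkdef]
      rw [hwD, hD]
      linear_combination s^2 * e1 + (1-r)^2 * hsc
    rw [mul_div_assoc, e1]
    ring
  rw [hrad, abs_of_pos (by positivity)]
  have hk : k = (1-r)/(1+r) := by field_simp; linarith
  generalize Real.sqrt _ = S
  rw [hk]
  simp only [div_pow, mul_pow, pow_succ]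
  field_simp
  simp

theorem integral_subst (m : ℕ) (r : ℝ) (hr : 0 ≤ r) (hr1 : r < 1) :
    ∫ φ in Set.Ioo 0 π, gradN (m+2) r (Real.cos φ) * Real.sin φ ^ m =
    2^(m+1) / ((1+r)^(m+1) * (1-r)) *
    ∫ θ in (0:ℝ)..(π / 2),
      (Real.sqrt ((((m+2:ℕ) : ℝ) - (((m+2:ℕ) : ℝ) - 2) * r) ^ 2 +
          4 * ((m+2:ℕ) : ℝ) * (((m+2:ℕ) : ℝ) - 2) * r * Real.cos θ ^ 2) *
        Real.sin θ ^ m /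
        (1 + ((1 - r) / (1 + r)) ^ 2 * Real.tan θ ^ 2) ^ ((((m+2:ℕ) : ℝ) - 2) / 2)) := by
  rw [intervalIntegral.integral_of_le (by positivity), integral_Ioc_eq_integral_Ioo,
    ← integral_const_mul]
  have hkpos : 0 < (1-r)/(1+r) := div_pos (by linarith) (by linarith)
  have himg : Set.image (fun θ => 2 * Real.arctan ((1-r)/(1+r) * Real.tan θ)) (Set.Ioo 0 (π/2))
      = Set.Ioo 0 π := by
    ext φ
    constructor
    · rintro ⟨θ, hθ, rfl⟩
      have := Real.tan_pos_of_pos_of_lt_pi_div_two hθ.1 hθ.2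
      have h1 := Real.arctan_lt_pi_div_two ((1-r)/(1+r) * Real.tan θ)
      have h2 := Real.arctan_pos.2 (mul_pos hkpos this)
      exact ⟨by simp only; linarith, by simp only; linarith⟩
    · intro hφ
      have ht := Real.tan_pos_of_pos_of_lt_pi_div_two (x := φ/2) (by linarith [hφ.1])
        (by linarith [hφ.2])
      refine ⟨Real.arctan (((1-r)/(1+r))⁻¹ * Real.tan (φ/2)),
        ⟨Real.arctan_pos.2 (mul_pos (inv_pos.2 hkpos) ht), Real.arctan_lt_pi_div_two _⟩, ?_⟩
      simp only [Real.tan_arctan]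
      rw [← mul_assoc, mul_inv_cancel₀ hkpos.ne', one_mul,
        Real.arctan_tan (by linarith [hφ.1, pi_pos]) (by linarith [hφ.2])]
      ring
  rw [← himg, integral_image_eq_integral_abs_deriv_smul measurableSet_Ioo
    (f' := fun θ => 2 * ((1 / (1 + ((1-r)/(1+r) * Real.tan θ)^2)) *
      ((1-r)/(1+r) * (1 / Real.cos θ ^2))))]
  · refine setIntegral_congr_fun measurableSet_Ioo fun θ hθ => ?_
    exact pointwise_subst m r θ hr hr1 hθ
  · intro θ hθ
    have hc : 0 < Real.cos θ := Real.cos_pos_of_mem_Ioo ⟨by linarith [hθ.1, pi_pos], hθ.2⟩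
    have := (((Real.hasDerivAt_tan hc.ne').const_mul ((1-r)/(1+r))).arctan).const_mul 2
    exact this.hasDerivWithinAt
  · intro a ha b hb hab
    have h1 : (1-r)/(1+r) * Real.tan a = (1-r)/(1+r) * Real.tan b :=
      Real.arctan_injective (by simpa using hab)
    have h2 := mul_left_cancel₀ hkpos.ne' h1
    exact Real.injOn_tan ⟨by linarith [ha.1, pi_pos], ha.2⟩ ⟨by linarith [hb.1, pi_pos], hb.2⟩ h2

/-- The gradient in `x` of the Poisson kernel. -/
def gradK {n : ℕ} (y x : Eu n) : Eu n :=
  (-(2 / ‖y - x‖ ^ n)) • x + ((n * (1 - ‖x‖^2)) / ‖y - x‖ ^ (n+2)) • (y - x)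

theorem hasFDerivAt_kernel {n : ℕ} (y x : Eu n) (h : y ≠ x) :
    HasFDerivAt (fun z : Eu n => (1 - ‖z‖^2) / ‖y - z‖^n) (innerSL ℝ (gradK y x)) x := by
  have hρ : 0 < ‖y - x‖ := norm_pos_iff.2 (sub_ne_zero.2 h)
  have h1 : HasFDerivAt (fun z : Eu n => 1 - ‖z‖^2) (-(2 • innerSL ℝ x)) x := by
    exact ((hasStrictFDerivAt_norm_sq x).hasFDerivAt).const_sub 1
  have h2 : HasFDerivAt (fun z : Eu n => y - z) (-ContinuousLinearMap.id ℝ (Eu n)) x :=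
    (hasFDerivAt_id x).const_sub y
  have h3 := (h2.norm_sq).sqrt (by positivity)
  have h4 : HasFDerivAt (fun z : Eu n => ‖y - z‖)
      ((1 / (2 * √(‖y - x‖ ^ 2))) • 2 • (innerSL ℝ (y - x)).comp (-ContinuousLinearMap.id ℝ (Eu n))) x := by
    refine h3.congr_of_eventuallyEq (Eventually.of_forall fun z => ?_)
    simp only [Real.sqrt_sq (norm_nonneg _)]
  have h5 : HasDerivAt (fun t : ℝ => (t^n)⁻¹) (-(n * ‖y-x‖^(n-1)) / (‖y-x‖^n)^2) ‖y - x‖ :=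
    (hasDerivAt_pow n ‖y-x‖).fun_inv (by positivity)
  have h6 := h1.mul (h5.comp_hasFDerivAt x h4)
  simp only [div_eq_mul_inv]
  refine (h6.congr_fderiv ?_)
  ext w
  simp only [gradK, Real.sqrt_sq hρ.le]
  simp only [_root_.add_apply, _root_.smul_apply,
    _root_.neg_apply, innerSL_apply_apply, ContinuousLinearMap.comp_apply,
    ContinuousLinearMap.id_apply, smul_eq_mul, Function.comp,
    inner_add_left, inner_smul_left, inner_neg_right, nsmul_eq_mul, RCLike.conj_to_real]
  generalize ‖y-x‖ = ρ at *
  rcases n with _ | n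
  · simp
  · simp only [Nat.add_sub_cancel, pow_succ]
    field_simp
    push_cast
    ring

theorem norm_gradK {n : ℕ} (x e : Eu n) (he : ‖e‖ = 1) (r : ℝ) (hxe : x = r • e)
    (hr1 : |r| < 1) (y : Eu n) (hy : ‖y‖ = 1) :
    ‖gradK y x‖ = gradN n r ⟪e, y⟫ := by
  have hxn : ‖x‖^2 = r^2 := by rw [hxe, norm_smul, he, mul_one, Real.norm_eq_abs, sq_abs]
  have hxy : ⟪x, y⟫ = r * ⟪e, y⟫ := by rw [hxe, inner_smul_left]; simp
  have hρ2 : ‖y - x‖^2 = 1 - 2*r*⟪e, y⟫ + r^2 := by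
    rw [norm_sub_sq_real, hxn, hy, real_inner_comm, hxy]; ring
  have hρ : 0 < ‖y - x‖ := by
    rw [norm_pos_iff, sub_ne_zero]
    rintro rfl
    rw [hxe, norm_smul, he, mul_one, Real.norm_eq_abs] at hy
    linarith
  have hin : ⟪x, y - x⟫ = (1 - r^2 - ‖y - x‖^2)/2 := by
    rw [inner_sub_right, hxy, real_inner_self_eq_norm_sq, hxn, hρ2]; ring
  unfold gradN
  rw [← hρ2, Real.sqrt_sq hρ.le]
  refine (sq_eq_sq₀ (norm_nonneg _) (by positivity)).1 ?_
  have hnn : 0 ≤ 4*r^2 + 2*n*(1-r^2) + n*(n-2)*(1-r^2)^2/‖y-x‖^2 := by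
    have : 4*r^2 + 2*n*(1-r^2) + n*(n-2)*(1-r^2)^2/‖y-x‖^2 = (‖y-x‖^n)^2 * ‖gradK y x‖^2 := by
      rw [gradK, norm_add_sq_real, inner_smul_left, inner_smul_right, hin, norm_smul, norm_smul,
        mul_pow, mul_pow, hxn, Real.norm_eq_abs, Real.norm_eq_abs, sq_abs, sq_abs]
      simp only [RCLike.conj_to_real, pow_succ _ (n+1), pow_succ _ n]
      generalize ‖y-x‖ = ρ at *
      field_simp
      ring
    rw [this]; positivity
  rw [mul_pow, Real.sq_sqrt hnn]
  rw [gradK, norm_add_sq_real, inner_smul_left, inner_smul_right, hin, norm_smul, norm_smul,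
        mul_pow, mul_pow, hxn, Real.norm_eq_abs, Real.norm_eq_abs, sq_abs, sq_abs]
  simp only [RCLike.conj_to_real, pow_succ _ (n+1), pow_succ _ n]
  generalize ‖y-x‖ = ρ at *
  field_simp
  ring

theorem gradK_bound {n : ℕ} (y x : Eu n) (hy : ‖y‖ = 1) (ε : ℝ) (hε : 0 < ε)
    (hx : ‖x‖ ≤ 1 - ε) :
    ‖gradK y x‖ ≤ 2 / ε^n + n / ε^(n+2) * 2 := by
  have hx1 : ‖x‖ ≤ 1 := by linarith
  have hρ : ε ≤ ‖y - x‖ := by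
    have := norm_sub_norm_le y x
    linarith
  have hρ2 : ‖y - x‖ ≤ 2 := by
    have := norm_sub_le y x
    linarith
  have hρ0 : 0 < ‖y - x‖ := by linarith
  refine (norm_add_le _ _).trans (add_le_add ?_ ?_)
  · rw [norm_smul, norm_neg, Real.norm_of_nonneg (by positivity)]
    calc 2 / ‖y - x‖^n * ‖x‖ ≤ 2 / ε^n * 1 := by gcongr
      _ = _ := mul_one _
  · have h0 : 0 ≤ 1 - ‖x‖^2 := by nlinarith [norm_nonneg x]
    have h1 : 1 - ‖x‖^2 ≤ 1 := by nlinarith [norm_nonneg x]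
    rw [norm_smul, Real.norm_of_nonneg (by positivity)]
    gcongr
    nlinarith [Nat.cast_nonneg (α := ℝ) n]

theorem measurable_gradK {n : ℕ} (x : Eu n) :
    Measurable (fun y : Metric.sphere (0 : Eu n) 1 => gradK (y : Eu n) x) := by
  unfold gradK; fun_prop

/-- The trace functional. -/
def trL (n : ℕ) : (Eu n →L[ℝ] Eu n) →L[ℝ] ℝ :=
  ∑ j, (EuclideanSpace.proj j : Eu n →L[ℝ] ℝ).comp
    (ContinuousLinearMap.apply ℝ (Eu n) (EuclideanSpace.single j (1:ℝ)))

theorem trL_smulRight {n : ℕ} (v w : Eu n) :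
    trL n ((innerSL ℝ v).smulRight w) = ⟪v, w⟫ := by
  simp [trL, PiLp.inner_apply, mul_comm]

theorem divg_poisson {n : ℕ} (x : Eu n) (hx : ‖x‖ < 1)
    (g : Metric.sphere (0 : Eu n) 1 → Eu n) (hg : Measurable g)
    (hg1 : ∀ᵐ y ∂((volume : Measure (Eu n)).toSphere), ‖g y‖ ≤ 1) :
    divg (poissonBallV g) x = (1 / sphereArea n) *
      ∫ y : Metric.sphere (0 : Eu n) 1, ⟪gradK (y : Eu n) x, g y⟫ ∂(volume.toSphere) := by
  set ε := (1 - ‖x‖)/2 with hε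
  have hε0 : 0 < ε := by linarith
  set F' : Eu n → Metric.sphere (0 : Eu n) 1 → (Eu n →L[ℝ] Eu n) :=
    fun z y => (innerSL ℝ (gradK (y : Eu n) z)).smulRight (g y) with hF'
  have hball : ∀ z ∈ Metric.ball x ε, ‖z‖ ≤ 1 - ε := by
    intro z hz
    rw [mem_ball_iff_norm] at hz
    have : ‖z‖ ≤ ‖z - x‖ + ‖x‖ := by simpa using norm_add_le (z - x) x
    linarith
  have hbound : ∀ᵐ y ∂((volume : Measure (Eu n)).toSphere), ∀ z ∈ Metric.ball x ε,
      ‖F' z y‖ ≤ 2 / ε^n + n / ε^(n+2) * 2 := by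
    filter_upwards [hg1] with y hy z hz
    simp only [hF', ContinuousLinearMap.norm_smulRight_apply, innerSL_apply_norm]
    have h1 := gradK_bound (y : Eu n) z (by simp) ε hε0 (hball z hz)
    calc _ ≤ (2 / ε^n + n / ε^(n+2) * 2) * 1 := by gcongr
      _ = _ := mul_one _
  have hmeas : AEStronglyMeasurable (F' x) (volume : Measure (Eu n)).toSphere := by
    have h1 : AEStronglyMeasurable (fun y : Metric.sphere (0 : Eu n) 1 =>
        innerSL ℝ (gradK (y : Eu n) x)) (volume : Measure (Eu n)).toSphere :=
      (innerSL ℝ).continuous.comp_aestronglyMeasurable (measurable_gradK x).aestronglyMeasurable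
    exact (ContinuousLinearMap.smulRightL ℝ (Eu n) (Eu n)).aestronglyMeasurable_comp₂ h1
      hg.aestronglyMeasurable
  have hIntegr : Integrable (F' x) (volume : Measure (Eu n)).toSphere := by
    refine Integrable.of_bound hmeas (2 / ε^n + n / ε^(n+2) * 2) ?_
    filter_upwards [hbound] with y hy using hy x (mem_ball_self hε0)
  have hFm : ∀ z : Eu n, AEStronglyMeasurable (fun y : Metric.sphere (0 : Eu n) 1 =>
      ((1 - ‖z‖ ^ 2) / ‖(y : Eu n) - z‖ ^ n) • g y) (volume : Measure (Eu n)).toSphere := by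
    intro z
    exact Measurable.aestronglyMeasurable (by fun_prop)
  have key := hasFDerivAt_integral_of_dominated_of_fderiv_le (𝕜 := ℝ)
    (μ := (volume : Measure (Eu n)).toSphere)
    (F := fun (z : Eu n) (y : Metric.sphere (0 : Eu n) 1) =>
      ((1 - ‖z‖ ^ 2) / ‖(y : Eu n) - z‖ ^ n) • g y) (F' := F') (x₀ := x)
    (bound := fun _ => 2 / ε^n + n / ε^(n+2) * 2)
    (Metric.ball_mem_nhds x hε0) (Eventually.of_forall hFm)
    (by
      refine Integrable.of_bound (hFm x) (1 / ε^n) ?_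
      filter_upwards [hg1] with y hy
      have hρ : ε ≤ ‖(y : Eu n) - x‖ := by
        have := norm_sub_norm_le (y : Eu n) x
        have h1 : ‖(y : Eu n)‖ = 1 := by simp
        linarith
      have h0 : 0 ≤ 1 - ‖x‖^2 := by nlinarith [norm_nonneg x]
      have h1 : 1 - ‖x‖^2 ≤ 1 := by nlinarith [norm_nonneg x]
      rw [norm_smul, Real.norm_of_nonneg (by positivity)]
      calc _ ≤ (1 / ε^n) * 1 := by gcongr
        _ = _ := mul_one _)
    hmeas hbound (integrable_const _)
    (by
      refine Eventually.of_forall fun y z hz => ?_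
      have hne : (y : Eu n) ≠ z := by
        intro h
        have h1 : ‖(y : Eu n)‖ = 1 := by simp
        have := hball z hz
        rw [← h] at this
        linarith
      exact (hasFDerivAt_kernel (y : Eu n) z hne).smul_const (g y))
  have key2 : HasFDerivAt (poissonBallV g)
      ((1 / sphereArea n) • ∫ y, F' x y ∂(volume : Measure (Eu n)).toSphere) x :=
    key.const_smul (1 / sphereArea n)
  have h1 : divg (poissonBallV g) x = trL n
      ((1 / sphereArea n) • ∫ y, F' x y ∂(volume : Measure (Eu n)).toSphere) := by
    unfold divg trL
    rw [_root_.sum_apply]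
    refine Finset.sum_congr rfl fun j _ => ?_
    have := ((EuclideanSpace.proj j : Eu n →L[ℝ] ℝ).hasFDerivAt.comp x key2).fderiv
    have e : (fun y => (poissonBallV g y) j) =
      (EuclideanSpace.proj j : Eu n →L[ℝ] ℝ) ∘ (poissonBallV g) := rfl
    rw [e, this]
    rfl
  rw [h1, map_smul, smul_eq_mul, ← ContinuousLinearMap.integral_comp_comm _ hIntegr]
  simp only [hF', trL_smulRight]

theorem sphereArea_pos {n : ℕ} (hn : 0 < n) : 0 < sphereArea n := by
  unfold sphereArea
  have := Real.Gamma_pos_of_pos (show (0:ℝ) < (n:ℝ)/2 by positivity)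
  positivity

theorem sphereArea_one : sphereArea 1 = 2 := by
  unfold sphereArea
  rw [Nat.cast_one, Real.Gamma_one_half_eq, Real.sqrt_eq_rpow]
  field_simp

theorem sphereArea_two : sphereArea 2 = 2 * π := by
  unfold sphereArea
  norm_num

theorem sphereArea_three : sphereArea 3 = 4 * π := by
  unfold sphereArea
  have h1 : ((3:ℕ):ℝ)/2 = 1/2 + 1 := by norm_num
  rw [h1, Real.Gamma_add_one (by norm_num), Real.Gamma_one_half_eq, Real.rpow_add pi_pos,
    Real.sqrt_eq_rpow, Real.rpow_one]
  field_simp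
  norm_num

theorem Tcoef_two (r : ℝ) (hr : 0 ≤ r) (hr1 : r < 1) : Tcoef 2 r = 2 / (1 - r ^ 2) := by
  unfold Tcoef
  have h4 : √(4:ℝ) = 2 := by
    rw [show (4:ℝ) = 2^2 by norm_num, Real.sqrt_sq (by norm_num)]
  simp only [sphereArea_two, Nat.add_one_sub_one, sphereArea_one]
  norm_num [h4]
  have : (1 - r^2) = (1-r)*(1+r) := by ring
  rw [this]
  have h1 : 1 - r ≠ 0 := by linarith
  have h2 : 1 + r ≠ 0 := by linarith
  field_simp
  try norm_num

theorem integral_three (r : ℝ) (hr : 0 < r) (hr1 : r < 1) :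
    ∫ θ in (0:ℝ)..(π / 2),
      Real.sqrt (((3:ℕ) - (((3:ℕ) : ℝ) - 2) * r) ^ 2 +
          4 * ((3:ℕ) : ℝ) * (((3:ℕ) : ℝ) - 2) * r * Real.cos θ ^ 2) *
        Real.sin θ ^ (3 - 2) /
        (1 + ((1 - r) / (1 + r)) ^ 2 * Real.tan θ ^ 2) ^ ((((3:ℕ) : ℝ) - 2) / 2)
    = (1+r)/(4*r) * (4*r + (3-r^2)/√3 * Real.log ((Real.sqrt 3 + r) / (Real.sqrt 3 - r))) := by
  set G : ℝ → ℝ := fun v => v/2 * √(6-2*r^2+3*v^2) +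
    (3-r^2)/√3 * Real.log (√3*v + √(6-2*r^2+3*v^2)) with hG
  set V : ℝ → ℝ := fun θ => √((1-r)^2 + 4*r*Real.cos θ^2) with hV
  have h3 : 0 < √(3:ℝ) := by positivity
  have h33 : √(3:ℝ)^2 = 3 := Real.sq_sqrt (by norm_num)
  have h1r : 0 < 1 - r := by linarith
  have hQpos : ∀ v : ℝ, 0 < 6-2*r^2+3*v^2 := fun v => by nlinarith [sq_nonneg v]
  have hG' : ∀ v, 0 < v → HasDerivAt G (√(6-2*r^2+3*v^2)) v := by
    intro v hv
    have hq : HasDerivAt (fun v : ℝ => 6-2*r^2+3*v^2) (3*(2*v)) v := by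
      have := ((hasDerivAt_pow 2 v).const_mul 3).const_add (6-2*r^2)
      simpa using this
    have hQ := hq.sqrt (hQpos v).ne'
    have hQp : 0 < √(6-2*r^2+3*v^2) := Real.sqrt_pos.2 (hQpos v)
    have hl := ((((hasDerivAt_id v).const_mul √3).add hQ).log (by
        have hpos : 0 < √3 * v + √(6-2*r^2+3*v^2) := by positivity
        exact hpos.ne')).const_mul ((3-r^2)/√3)
    have ht := (((hasDerivAt_id v).div_const 2).mul hQ).add hl
    refine ht.congr_deriv ?_
    have hQ2 : √(6-2*r^2+3*v^2)^2 = 6-2*r^2+3*v^2 := Real.sq_sqrt (hQpos v).le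
    simp only [id, Pi.add_apply]
    generalize √(6-2*r^2+3*v^2) = Q at *
    have hne : √3 * v + Q ≠ 0 := by positivity
    have e : (√3 * 1 + 3*(2*v)/(2*Q)) / (√3*v+Q) = √3/Q := by
      field_simp
      linear_combination (-v) * h33
    rw [e]
    field_simp
    linear_combination (-1) * hQ2
  have hVpos : ∀ θ, 0 < (1-r)^2 + 4*r*Real.cos θ^2 := fun θ => by positivity
  have hV' : ∀ θ, HasDerivAt V (-(4*r*Real.cos θ*Real.sin θ)/V θ) θ := by
    intro θ
    have := ((((Real.hasDerivAt_cos θ).pow 2).const_mul (4*r)).const_add ((1-r)^2)).sqrt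
      (hVpos θ).ne'
    refine this.congr_deriv ?_
    have : 0 < √((1-r)^2 + 4*r*Real.cos θ^2) := Real.sqrt_pos.2 (hVpos θ)
    simp only [hV, Pi.pow_apply]
    field_simp
    norm_num
    ring
  have hVp : ∀ θ, 0 < V θ := fun θ => Real.sqrt_pos.2 (hVpos θ)
  have hVc : Continuous V := by rw [hV]; fun_prop
  have step : ∫ θ in (0:ℝ)..(π / 2),
      √(6-2*r^2+3*(V θ)^2) * ((1+r) * Real.sin θ * Real.cos θ / V θ) =
      (-(1+r)/(4*r)) * G (V (π/2)) - (-(1+r)/(4*r)) * G (V 0) := by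
    refine intervalIntegral.integral_eq_sub_of_hasDerivAt
      (f := fun θ => (-(1+r)/(4*r)) * G (V θ)) ?_ ?_
    · intro θ _
      refine (((hG' _ (hVp θ)).comp θ (hV' θ)).const_mul (-(1+r)/(4*r))).congr_deriv ?_
      have := (hVp θ).ne'
      field_simp
    · refine Continuous.intervalIntegrable ?_ _ _
      have : ∀ θ, V θ ≠ 0 := fun θ => (hVp θ).ne'
      fun_prop (disch := assumption)
  have congr1 : ∫ θ in (0:ℝ)..(π / 2),
      Real.sqrt (((3:ℕ) - (((3:ℕ) : ℝ) - 2) * r) ^ 2 +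
          4 * ((3:ℕ) : ℝ) * (((3:ℕ) : ℝ) - 2) * r * Real.cos θ ^ 2) *
        Real.sin θ ^ (3 - 2) /
        (1 + ((1 - r) / (1 + r)) ^ 2 * Real.tan θ ^ 2) ^ ((((3:ℕ) : ℝ) - 2) / 2) =
      ∫ θ in (0:ℝ)..(π / 2),
      √(6-2*r^2+3*(V θ)^2) * ((1+r) * Real.sin θ * Real.cos θ / V θ) := by
    rw [intervalIntegral.integral_of_le (by positivity), integral_Ioc_eq_integral_Ioo,
      intervalIntegral.integral_of_le (by positivity), integral_Ioc_eq_integral_Ioo]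
    refine setIntegral_congr_fun measurableSet_Ioo fun θ hθ => ?_
    have hc : 0 < Real.cos θ := Real.cos_pos_of_mem_Ioo ⟨by linarith [hθ.1, pi_pos], hθ.2⟩
    have hV2 : V θ^2 = (1-r)^2 + 4*r*Real.cos θ^2 := Real.sq_sqrt (hVpos θ).le
    have hs2 := Real.sin_sq_add_cos_sq θ
    have hbase : 1 + ((1 - r) / (1 + r)) ^ 2 * Real.tan θ ^ 2 = (V θ / ((1+r) * Real.cos θ))^2 := by
      rw [Real.tan_eq_sin_div_cos, div_pow (V θ), hV2]
      field_simp
      linear_combination (1-r)^2 * hs2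
    have hexp : (((3:ℕ) : ℝ) - 2) / 2 = 1/2 := by norm_num
    have := hVp θ
    rw [hbase, hexp, ← Real.sqrt_eq_rpow, Real.sqrt_sq (by positivity), hV2]
    have e : ((((3:ℕ):ℝ)) - (((3:ℕ) : ℝ) - 2) * r) ^ 2 +
          4 * ((3:ℕ) : ℝ) * (((3:ℕ) : ℝ) - 2) * r * Real.cos θ ^ 2 =
        6 - 2*r^2 + 3*((1-r)^2 + 4*r*Real.cos θ^2) := by push_cast; ring
    rw [e, show 3 - 2 = 1 from rfl, pow_one]
    field_simp
  rw [congr1, step]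
  have e1 : V (π/2) = 1 - r := by
    simp only [hV, Real.cos_pi_div_two]
    rw [show (1-r)^2 + 4*r*0^2 = (1-r)^2 by ring, Real.sqrt_sq h1r.le]
  have e2 : V 0 = 1 + r := by
    simp only [hV, Real.cos_zero]
    rw [show (1-r)^2 + 4*r*1^2 = (1+r)^2 by ring, Real.sqrt_sq (by linarith)]
  have e3 : √(6-2*r^2+3*(1-r)^2) = 3 - r := by
    rw [show 6-2*r^2+3*(1-r)^2 = (3-r)^2 by ring, Real.sqrt_sq (by linarith)]
  have e4 : √(6-2*r^2+3*(1+r)^2) = 3 + r := by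
    rw [show 6-2*r^2+3*(1+r)^2 = (3+r)^2 by ring, Real.sqrt_sq (by linarith)]
  have h3gt : r < √3 := lt_of_lt_of_le hr1 (by
    rw [show (1:ℝ) = √1 by simp]; exact Real.sqrt_le_sqrt (by norm_num))
  have l1 : √3*(1-r) + (3-r) = (1+√3)*(√3-r) := by linear_combination (-1) * h33
  have l2 : √3*(1+r) + (3+r) = (1+√3)*(√3+r) := by linear_combination (-1) * h33
  simp only [hG, e1, e2, e3, e4, l1, l2]
  rw [Real.log_mul (by positivity) (by linarith), Real.log_mul (by positivity) (by positivity),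
    Real.log_div (by positivity) (by linarith)]
  field_simp
  ring

theorem Tcoef_three (r : ℝ) (hr : 0 < r) (hr1 : r < 1) :
    Tcoef 3 r = (1 / (1 - r ^ 2)) *
          (2 + ((3 - r ^ 2) / (2 * Real.sqrt 3 * r)) *
            Real.log ((Real.sqrt 3 + r) / (Real.sqrt 3 - r))) := by
  unfold Tcoef
  rw [integral_three r hr hr1, sphereArea_three, show 3 - 1 = 2 from rfl, sphereArea_two]
  have : (1 - r^2) = (1-r)*(1+r) := by ring
  rw [this]
  have h1 : 1 - r ≠ 0 := by linarith
  have h2 : 1 + r ≠ 0 := by linarith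
  field_simp
  ring

theorem integral_norm_gradK (m : ℕ) (x : Eu (m+2)) (hx : ‖x‖ < 1) :
    (1 / sphereArea (m+2)) * ∫ y : Metric.sphere (0 : Eu (m+2)) 1, ‖gradK (y : Eu (m+2)) x‖
      ∂(volume.toSphere) = Tcoef (m+2) ‖x‖ := by
  obtain ⟨e, he, hxe⟩ : ∃ e : Eu (m+2), ‖e‖ = 1 ∧ x = ‖x‖ • e := by
    by_cases h : x = 0
    · exact ⟨EuclideanSpace.single 0 1, by simp, by simp [h]⟩
    · have := norm_pos_iff.2 h
      refine ⟨‖x‖⁻¹ • x, ?_, ?_⟩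
      · rw [norm_smul, norm_inv, norm_norm, inv_mul_cancel₀ this.ne']
      · rw [smul_smul, mul_inv_cancel₀ this.ne', one_smul]
  have h1 : ∀ y : Metric.sphere (0 : Eu (m+2)) 1,
      ‖gradK (y : Eu (m+2)) x‖ = gradN (m+2) ‖x‖ ⟪e, (y : Eu (m+2))⟫ := fun y =>
    norm_gradK x e he ‖x‖ hxe (by rwa [abs_norm]) y (by simp)
  simp only [h1]
  rw [integral_slice e he (gradN (m+2) ‖x‖) (by unfold gradN; fun_prop)
    (fun t => by unfold gradN; positivity), integral_subst m ‖x‖ (norm_nonneg x) hx]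
  unfold Tcoef
  rw [show m + 2 - 1 = m + 1 from rfl, show m + 2 - 2 = m from rfl]
  generalize (∫ θ in (0:ℝ)..(π/2), (_ : ℝ)) = I
  have := (sphereArea_pos (n := m+2) (by omega)).ne'
  have : 1 - ‖x‖ ≠ 0 := by linarith
  have : 1 + ‖x‖ ≠ 0 := by positivity
  field_simp

/-- For `n ≥ 2` and `x` in the open unit ball `𝔹 ⊂ ℝⁿ`, the smallest
constant `c` such that `|div u(x)| ≤ c ‖g‖_{[L^∞(S^{n-1})]^n}` for every Poisson
integral `u` of `g ∈ [L^∞(S^{n-1})]^n` (equivalently, such that `|div u(x)| ≤ c`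
whenever `‖g‖_∞ ≤ 1`) equals `𝒯_n(x)`. In particular `𝒯_2(x) = 2/(1-r²)` and
`𝒯_3(x) = (1/(1-r²))(2 + ((3-r²)/(2√3 r)) ln((√3+r)/(√3-r)))` (the latter for `r > 0`). -/
theorem sharp_divergence_coefficient_ball
    (n : ℕ) (hn : 2 ≤ n) (x : Eu n) (hx : x ∈ Metric.ball (0 : Eu n) 1) :
    IsLeast {c : ℝ |
        ∀ g : Metric.sphere (0 : Eu n) 1 → Eu n, Measurable g →
          (∀ᵐ y ∂((volume : Measure (Eu n)).toSphere), ‖g y‖ ≤ 1) →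
          |divg (poissonBallV g) x| ≤ c}
      (Tcoef n ‖x‖)
    ∧ (∀ r : ℝ, 0 ≤ r → r < 1 → Tcoef 2 r = 2 / (1 - r ^ 2))
    ∧ (∀ r : ℝ, 0 < r → r < 1 →
        Tcoef 3 r = (1 / (1 - r ^ 2)) *
          (2 + ((3 - r ^ 2) / (2 * Real.sqrt 3 * r)) *
            Real.log ((Real.sqrt 3 + r) / (Real.sqrt 3 - r)))) := by
  refine ⟨?_, Tcoef_two, Tcoef_three⟩
  obtain ⟨m, rfl⟩ : ∃ m, n = m + 2 := ⟨n - 2, by omega⟩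
  have hx1 : ‖x‖ < 1 := by simpa using hx
  have hω := sphereArea_pos (n := m+2) (by omega)
  have hIntegr : Integrable (fun y : Metric.sphere (0 : Eu (m+2)) 1 => ‖gradK (y : Eu (m+2)) x‖)
      (volume : Measure (Eu (m+2))).toSphere := by
    refine Integrable.norm (Integrable.of_bound (measurable_gradK x).aestronglyMeasurable _
      (Eventually.of_forall fun y => gradK_bound (y : Eu (m+2)) x (by simp) (1 - ‖x‖)
        (by linarith) (by linarith)))
  constructor
  · intro g hg hg1
    rw [divg_poisson x hx1 g hg hg1, ← integral_norm_gradK m x hx1, abs_mul,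
      abs_of_pos (by positivity)]
    refine mul_le_mul_of_nonneg_left ?_ (by positivity)
    rw [← Real.norm_eq_abs]
    refine norm_integral_le_of_norm_le hIntegr ?_
    filter_upwards [hg1] with y hy
    refine (norm_inner_le_norm _ _).trans ?_
    exact mul_le_of_le_one_right (norm_nonneg _) hy
  · intro c hc
    set g : Metric.sphere (0 : Eu (m+2)) 1 → Eu (m+2) :=
      fun y => ‖gradK (y : Eu (m+2)) x‖⁻¹ • gradK (y : Eu (m+2)) x with hgdef
    have hgm : Measurable g := by
      have := measurable_gradK x
      rw [hgdef]; fun_prop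
    have hg1 : ∀ᵐ y ∂((volume : Measure (Eu (m+2))).toSphere), ‖g y‖ ≤ 1 := by
      refine Eventually.of_forall fun y => ?_
      rw [hgdef, norm_smul, norm_inv, norm_norm]
      exact inv_mul_le_one
    have h1 := hc g hgm hg1
    have h2 : ∀ y : Metric.sphere (0 : Eu (m+2)) 1,
        ⟪gradK (y : Eu (m+2)) x, g y⟫ = ‖gradK (y : Eu (m+2)) x‖ := by
      intro y
      simp only [hgdef, inner_smul_right, real_inner_self_eq_norm_sq]
      by_cases h0 : ‖gradK (y : Eu (m+2)) x‖ = 0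
      · simp [h0]
      · field_simp
    rw [divg_poisson x hx1 g hgm hg1] at h1
    simp only [h2] at h1
    rw [integral_norm_gradK m x hx1] at h1
    exact (le_abs_self _).trans h1
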